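/- Let G be a strongly uncontrollable graph on n vertices and let G̃ be the graph on n+2 vertices obtained from G by adding two new vertices, non-adjacent to each other, each adjacent to every vertex of G. Then G̃ is strongly uncontrollable if and only if neither n − 2 nor n is an eigenvalue of L(G). -/

import Mathlib

open Classical Matrix

noncomputable def lap {n : ℕ} (G : SimpleGraph (Fin n)) : Matrix (Fin n) (Fin n) ℝ :=
  Matrix.of fun i j =>
    (if i = j then ((G.neighborSet i).ncard : ℝ) else 0) - (if G.Adj i j then 1 else 0)

def IsTwin {n : ℕ} (G : SimpleGraph (Fin n)) (u v : Fin n) : Prop :=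
  u ≠ v ∧ G.neighborSet u \ {v} = G.neighborSet v \ {u}

def IsEigenvalue {n : ℕ} (M : Matrix (Fin n) (Fin n) ℝ) (μ : ℝ) : Prop :=
  ∃ x : Fin n → ℝ, x ≠ 0 ∧ M.mulVec x = μ • x

def HasSimpleSpectrum {n : ℕ} (M : Matrix (Fin n) (Fin n) ℝ) : Prop :=
  ∃ μ : Fin n → ℝ, Function.Injective μ ∧ ∀ i, IsEigenvalue M (μ i)

def Controllable {n : ℕ} (M : Matrix (Fin n) (Fin n) ℝ) (b : Fin n → ℝ) : Prop :=
  Submodule.span ℝ (Set.range fun k : Fin n => (M ^ (k : ℕ)).mulVec b) = ⊤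

def StronglyUncontrollable {n : ℕ} (G : SimpleGraph (Fin n)) : Prop :=
  G.Connected ∧ HasSimpleSpectrum (lap G) ∧
    ∀ b : Fin n → ℝ, (∀ i, b i = 0 ∨ b i = 1) → ¬ Controllable (lap G) b

def Pmat {n k : ℕ} (c : Fin n → Fin k) : Matrix (Fin n) (Fin k) ℝ :=
  Matrix.of fun i j => if c i = j then 1 else 0

def IsAEP {n k : ℕ} (G : SimpleGraph (Fin n)) (c : Fin n → Fin k) : Prop :=
  ∀ i j : Fin k, i ≠ j → ∀ x y : Fin n, c x = i → c y = i →
    (G.neighborSet x ∩ {z | c z = j}).ncard = (G.neighborSet y ∩ {z | c z = j}).ncard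

noncomputable def quotLap {n k : ℕ} (G : SimpleGraph (Fin n)) (c : Fin n → Fin k) :
    Matrix (Fin k) (Fin k) ℝ :=
  ((Pmat c)ᵀ * Pmat c)⁻¹ * (Pmat c)ᵀ * lap G * Pmat c

def IsQuotAEP {k m : ℕ} (Lq : Matrix (Fin k) (Fin k) ℝ) (r : Fin k → Fin m) : Prop :=
  ∀ a b : Fin m, a ≠ b → ∀ C C' : Fin k, r C = a → r C' = a →
    ∑ C'' ∈ Finset.univ.filter (fun C'' => r C'' = b), Lq C C'' =
      ∑ C'' ∈ Finset.univ.filter (fun C'' => r C'' = b), Lq C' C''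

def IsGraphAut {n : ℕ} (G : SimpleGraph (Fin n)) (σ : Equiv.Perm (Fin n)) : Prop :=
  ∀ x y, G.Adj x y ↔ G.Adj (σ x) (σ y)

def joinOne {n : ℕ} (G : SimpleGraph (Fin n)) : SimpleGraph (Fin (n + 1)) where
  Adj x y := x ≠ y ∧ ((x : ℕ) = n ∨ (y : ℕ) = n ∨
    ∃ (hx : (x : ℕ) < n) (hy : (y : ℕ) < n), G.Adj ⟨x, hx⟩ ⟨y, hy⟩)
  symm := by
    constructor
    rintro x y ⟨hxy, h⟩
    refine ⟨hxy.symm, ?_⟩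
    rcases h with h | h | ⟨hx, hy, h⟩
    exacts [Or.inr (Or.inl h), Or.inl h, Or.inr (Or.inr ⟨hy, hx, h.symm⟩)]
  loopless := ⟨fun x h => h.1 rfl⟩

def joinTwo {n : ℕ} (G : SimpleGraph (Fin n)) : SimpleGraph (Fin (n + 2)) where
  Adj x y := x ≠ y ∧ (((x : ℕ) < n ∧ n ≤ (y : ℕ)) ∨ ((y : ℕ) < n ∧ n ≤ (x : ℕ)) ∨
    ∃ (hx : (x : ℕ) < n) (hy : (y : ℕ) < n), G.Adj ⟨x, hx⟩ ⟨y, hy⟩)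
  symm := by
    constructor
    rintro x y ⟨hxy, h⟩
    refine ⟨hxy.symm, ?_⟩
    rcases h with h | h | ⟨hx, hy, h⟩
    exacts [Or.inr (Or.inl h), Or.inl h, Or.inr (Or.inr ⟨hy, hx, h.symm⟩)]
  loopless := ⟨fun x h => h.1 rfl⟩

def addPendant {n : ℕ} (G : SimpleGraph (Fin n)) (v : Fin n) : SimpleGraph (Fin (n + 1)) where
  Adj x y := ((x : ℕ) = n ∧ (y : ℕ) = (v : ℕ)) ∨ ((y : ℕ) = n ∧ (x : ℕ) = (v : ℕ)) ∨
    ∃ (hx : (x : ℕ) < n) (hy : (y : ℕ) < n), G.Adj ⟨x, hx⟩ ⟨y, hy⟩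
  symm := by
    constructor
    rintro x y (h | h | ⟨hx, hy, h⟩)
    exacts [Or.inr (Or.inl h), Or.inl h, Or.inr (Or.inr ⟨hy, hx, h.symm⟩)]
  loopless := by
    constructor
    intro x h
    have hv := v.isLt
    rcases h with ⟨h1, h2⟩ | ⟨h1, h2⟩ | ⟨hx, hy, h⟩
    · omega
    · omega
    · exact G.irrefl h

/-!
Write vectors on `G̃` as `(x; y)` with `x` on `G` and `y` on the two new vertices. An eigenvector
`x` of `L(G)` for an eigenvalue `a ≠ 0` has zero sum, so `(x; 0)` is an eigenvector of `L(G̃)` for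
`a + 2`. The remaining eigenvectors of `L(G̃)` are the constants, `(0; 1, -1)` for `n` and
`(2; -n, -n)` for `n + 2`; hence the spectrum stays simple exactly when neither `n` nor `n + 2` is
of the form `a + 2`.

Uncontrollability is always inherited. By the Popov–Belevitch–Hautus test, a pair `(M, b)` with `M`
symmetric is uncontrollable iff some eigenvector of `M` is orthogonal to `b`. The restriction of a
binary `b` to `G` is nonnegative, so, unless it vanishes, an eigenvector `x` of `L(G)` orthogonal to
it is not constant. As `G` is connected, the eigenvalue of `x` is then nonzero, and `(x; 0)` is an
eigenvector of `L(G̃)` orthogonal to `b`. If the restriction vanishes, any nonconstant eigenvector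
`x` will do.
-/

theorem exists_hasEigenvector_mem_orthogonal {𝕜 E : Type*} [RCLike 𝕜] [NormedAddCommGroup E]
    [InnerProductSpace 𝕜 E] [FiniteDimensional 𝕜 E] {T : Module.End 𝕜 E} (hT : T.IsSymmetric)
    {K : Submodule 𝕜 E} (hK : K ∈ T.invtSubmodule) (hK' : K ≠ ⊤) :
    ∃ μ, ∃ x ∈ Kᗮ, T.HasEigenvector μ x := by
  have hinv : ∀ x ∈ Kᗮ, T x ∈ Kᗮ := hT.orthogonalComplement_mem_invtSubmodule hK
  have : Nontrivial Kᗮ :=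
    Submodule.nontrivial_iff_ne_bot.2 fun h => hK' (K.orthogonal_eq_bot_iff.1 h)
  obtain ⟨x, hx⟩ :=
    (hT.restrict_invariant hinv).hasEigenvalue_iSup_of_finiteDimensional.exists_hasEigenvector
  exact ⟨_, x, x.2, Module.End.mem_eigenspace_iff.2 (congrArg Subtype.val hx.apply_eq_smul),
    fun h => hx.2 (Subtype.ext h)⟩

theorem dotProduct_pow_mulVec_of_vecMul_eq_smul {ι R : Type*} [Fintype ι] [DecidableEq ι]
    [CommSemiring R] {M : Matrix ι ι R} {μ : R} {x : ι → R} (hx : x ᵥ* M = μ • x) (y : ι → R)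
    (k : ℕ) : x ⬝ᵥ (M ^ k *ᵥ y) = μ ^ k * (x ⬝ᵥ y) := by
  induction k with
  | zero => simp
  | succ k ih =>
    rw [pow_succ', ← mulVec_mulVec, dotProduct_mulVec, hx, smul_dotProduct, ih, smul_eq_mul,
      pow_succ', mul_assoc]

/-- The Krylov subspace `span {b, M b, M² b, …}`, whose equality with the whole space is
controllability. All powers of `M` are used, so that invariance under `M` is immediate; by the
Cayley–Hamilton theorem the powers below the dimension suffice. -/
def krylov {ι R : Type*} [Fintype ι] [DecidableEq ι] [CommSemiring R] (M : Matrix ι ι R)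
    (b : ι → R) : Submodule R (ι → R) :=
  Submodule.span R (Set.range fun k : ℕ => M ^ k *ᵥ b)

theorem mulVec_mem_krylov {ι R : Type*} [Fintype ι] [DecidableEq ι] [CommSemiring R]
    {M : Matrix ι ι R} {b x : ι → R} (hx : x ∈ krylov M b) : M *ᵥ x ∈ krylov M b := by
  suffices krylov M b ≤ (krylov M b).comap M.mulVecLin from this hx
  rw [krylov, Submodule.span_le]
  rintro _ ⟨k, rfl⟩
  exact Submodule.subset_span ⟨k + 1, by simp [pow_succ']⟩

theorem pow_mulVec_mem_span_fin {R : Type*} [CommRing R] [Nontrivial R] {n : ℕ}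
    (M : Matrix (Fin n) (Fin n) R) (b : Fin n → R) (k : ℕ) :
    M ^ k *ᵥ b ∈ Submodule.span R (Set.range fun j : Fin n => M ^ (j : ℕ) *ᵥ b) := by
  rcases Nat.eq_zero_or_pos n with rfl | hn
  · simp [Subsingleton.elim (M ^ k *ᵥ b) 0]
  have hcharpoly : M.charpoly.natDegree = n := by simp [M.charpoly_natDegree_eq_dim]
  have hcharpoly_ne_one : M.charpoly ≠ 1 := fun h => by simp [h, hn.ne] at hcharpoly
  have hdeg : (Polynomial.X ^ k %ₘ M.charpoly).natDegree < n :=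
    (Polynomial.natDegree_modByMonic_lt _ M.charpoly_monic hcharpoly_ne_one).trans_eq hcharpoly
  rw [pow_eq_aeval_mod_charpoly, Polynomial.aeval_eq_sum_range' hdeg, sum_mulVec]
  refine Submodule.sum_mem _ fun j hj => ?_
  rw [smul_mulVec]
  exact Submodule.smul_mem _ _ (Submodule.subset_span ⟨⟨j, Finset.mem_range.1 hj⟩, rfl⟩)

section Controllability

variable {n : ℕ} {M : Matrix (Fin n) (Fin n) ℝ} {b : Fin n → ℝ}

theorem controllable_iff_krylov_eq_top : Controllable M b ↔ krylov M b = ⊤ := by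
  suffices Submodule.span ℝ (Set.range fun k : Fin n => M ^ (k : ℕ) *ᵥ b) = krylov M b by
    rw [Controllable, this]
  refine le_antisymm (Submodule.span_mono ?_) (Submodule.span_le.2 ?_)
  · rintro _ ⟨k, rfl⟩
    exact ⟨k, rfl⟩
  · rintro _ ⟨k, rfl⟩
    exact pow_mulVec_mem_span_fin M b k

theorem exists_eigenvector_of_not_controllable (hM : M.IsSymm) (hb : ¬ Controllable M b) :
    ∃ (μ : ℝ) (x : Fin n → ℝ), x ≠ 0 ∧ M *ᵥ x = μ • x ∧ x ⬝ᵥ b = 0 := by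
  let e := WithLp.linearEquiv 2 ℝ (Fin n → ℝ)
  let K : Submodule ℝ (EuclideanSpace ℝ (Fin n)) := (krylov M b).comap e.toLinearMap
  have hT : (toEuclideanLin M).IsSymmetric := isSymmetric_toEuclideanLin_iff.2 hM
  have hinv : K ∈ Module.End.invtSubmodule (toEuclideanLin M) := fun x hx => mulVec_mem_krylov hx
  have hK : K ≠ ⊤ := fun h => hb <| controllable_iff_krylov_eq_top.2 <|
    Submodule.comap_injective_of_surjective e.surjective h
  obtain ⟨μ, x, hxK, hx⟩ := exists_hasEigenvector_mem_orthogonal hT hinv hK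
  refine ⟨μ, e x, e.map_ne_zero_iff.2 hx.2, congrArg e hx.apply_eq_smul, ?_⟩
  have hbK : e.symm b ∈ K := Submodule.subset_span ⟨0, by simp⟩
  simpa [e, dotProduct_comm, EuclideanSpace.inner_eq_star_dotProduct] using hxK _ hbK

theorem not_controllable_iff_exists_eigenvector (hM : M.IsSymm) :
    ¬ Controllable M b ↔
      ∃ (μ : ℝ) (x : Fin n → ℝ), x ≠ 0 ∧ M *ᵥ x = μ • x ∧ x ⬝ᵥ b = 0 := by
  refine ⟨exists_eigenvector_of_not_controllable hM, ?_⟩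
  rintro ⟨μ, x, hx0, hx, hxb⟩ hctrl
  have hx' : x ᵥ* M = μ • x := by rw [← mulVec_transpose, hM, hx]
  have hker : krylov M b ≤ LinearMap.ker (dotProductBilin ℝ ℝ x) := by
    rw [krylov, Submodule.span_le]
    rintro _ ⟨k, rfl⟩
    simp [dotProduct_pow_mulVec_of_vecMul_eq_smul hx', hxb]
  rw [controllable_iff_krylov_eq_top.1 hctrl] at hker
  exact hx0 (dotProduct_eq_zero x fun y => hker (Submodule.mem_top (x := y)))

end Controllability

theorem repr_mulVec_of_eigenbasis {ι κ R : Type*} [Fintype ι] [CommRing R] {A : Matrix ι ι R}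
    {μ : κ → R} {v : Module.Basis κ R (ι → R)} (hv : ∀ i, A *ᵥ v i = μ i • v i) (x : ι → R)
    (i : κ) : v.repr (A *ᵥ x) i = μ i * v.repr x i := by
  have hcoord : v.coord i ∘ₗ A.mulVecLin = μ i • v.coord i := by
    refine v.ext fun j => ?_
    rcases eq_or_ne j i with rfl | hji <;> simp [*]
  exact LinearMap.congr_fun hcoord x

section SimpleSpectrum

variable {n : ℕ} {M : Matrix (Fin n) (Fin n) ℝ}

theorem HasSimpleSpectrum.exists_eigenbasis (hM : HasSimpleSpectrum M) :
    ∃ (μ : Fin n → ℝ) (v : Module.Basis (Fin n) ℝ (Fin n → ℝ)),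
      Function.Injective μ ∧ ∀ i, M *ᵥ v i = μ i • v i := by
  obtain ⟨μ, hμ, hev⟩ := hM
  choose v hv0 hv using hev
  have hli : LinearIndependent ℝ v :=
    Module.End.eigenvectors_linearIndependent' (toLin' M) μ hμ v fun i =>
      ⟨Module.End.mem_eigenspace_iff.2 (hv i), hv0 i⟩
  exact ⟨μ, basisOfLinearIndependentOfCardEqFinrank' v hli (by simp), hμ, fun i => by
    simpa using hv i⟩

theorem HasSimpleSpectrum.exists_eq_smul (hM : HasSimpleSpectrum M) {a : ℝ} {x y : Fin n → ℝ}
    (hy0 : y ≠ 0) (hy : M *ᵥ y = a • y) (hx : M *ᵥ x = a • x) : ∃ c : ℝ, x = c • y := by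
  obtain ⟨μ, v, hμ, hv⟩ := hM.exists_eigenbasis
  have hrepr {z : Fin n → ℝ} (hz : M *ᵥ z = a • z) (i : Fin n) (hi : v.repr z i ≠ 0) : μ i = a :=
    mul_right_cancel₀ hi (by rw [← repr_mulVec_of_eigenbasis hv, hz]; simp)
  obtain ⟨i, hi⟩ : ∃ i, v.repr y i ≠ 0 := by
    by_contra! h
    exact hy0 (v.ext_elem (by simpa using h))
  have hoff {z : Fin n → ℝ} (hz : M *ᵥ z = a • z) (j : Fin n) (hj : j ≠ i) : v.repr z j = 0 := by
    by_contra h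
    exact hj (hμ ((hrepr hz j h).trans (hrepr hy i hi).symm))
  refine ⟨v.repr x i / v.repr y i, v.ext_elem fun j => ?_⟩
  rcases eq_or_ne j i with rfl | hj
  · simp [hi]
  · simp [hoff hx j hj, hoff hy j hj]

end SimpleSpectrum

section Laplacian

variable {n : ℕ} {G : SimpleGraph (Fin n)} {a : ℝ} {x : Fin n → ℝ}

theorem lap_eq_lapMatrix (G : SimpleGraph (Fin n)) : lap G = G.lapMatrix ℝ := by
  ext i j
  simp [lap, SimpleGraph.lapMatrix, SimpleGraph.degMatrix, SimpleGraph.adjMatrix_apply,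
    diagonal_apply, Set.ncard_eq_toFinset_card', ← SimpleGraph.card_neighborSet_eq_degree]

theorem isSymm_lap (G : SimpleGraph (Fin n)) : (lap G).IsSymm :=
  lap_eq_lapMatrix G ▸ G.isSymm_lapMatrix ℝ

theorem lap_mulVec_apply (G : SimpleGraph (Fin n)) (x : Fin n → ℝ) (i : Fin n) :
    (lap G *ᵥ x) i = ∑ j, if G.Adj i j then x i - x j else 0 := by
  rw [lap_eq_lapMatrix, SimpleGraph.lapMatrix_mulVec_apply, SimpleGraph.degree_eq_sum_if_adj,
    Finset.sum_mul, SimpleGraph.neighborFinset_eq_filter, Finset.sum_filter,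
    ← Finset.sum_sub_distrib]
  exact Finset.sum_congr rfl fun j _ => by split_ifs <;> ring

theorem lap_mulVec_const (G : SimpleGraph (Fin n)) (c : ℝ) : lap G *ᵥ (fun _ => c) = 0 := by
  ext i
  simp [lap_mulVec_apply]

theorem isEigenvalue_lap_zero (G : SimpleGraph (Fin n)) (hn : n ≠ 0) : IsEigenvalue (lap G) 0 :=
  ⟨fun _ => 1, fun h => one_ne_zero (congrFun h ⟨0, hn.pos⟩), by simp [lap_mulVec_const]⟩

theorem nonneg_of_isEigenvalue_lap (ha : IsEigenvalue (lap G) a) : 0 ≤ a := by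
  obtain ⟨x, hx0, hx⟩ := ha
  have hquad : 0 ≤ a * (x ⬝ᵥ x) := by
    have := (G.posSemidef_lapMatrix ℝ).dotProduct_mulVec_nonneg x
    rwa [star_trivial, ← lap_eq_lapMatrix, hx, dotProduct_smul, smul_eq_mul] at this
  exact nonneg_of_mul_nonneg_left hquad (by simpa using dotProduct_star_self_pos_iff.2 hx0)

theorem sum_eq_zero_of_lap_mulVec_eq_smul (ha : a ≠ 0) (hx : lap G *ᵥ x = a • x) :
    ∑ i, x i = 0 := by
  have h : (fun _ => 1) ⬝ᵥ (lap G *ᵥ x) = 0 := by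
    rw [dotProduct_mulVec, ← mulVec_transpose, isSymm_lap, lap_mulVec_const, zero_dotProduct]
  simpa [hx, dotProduct, ← Finset.mul_sum, ha] using h

theorem lap_eigenvalue_ne_zero_of_dotProduct_eq_zero (hG : G.Connected) {b : Fin n → ℝ} (hb : 0 ≤ b)
    (hb0 : b ≠ 0) (hx0 : x ≠ 0) (hx : lap G *ᵥ x = a • x) (hxb : x ⬝ᵥ b = 0) : a ≠ 0 := by
  rintro rfl
  have hconst : ∀ i j, x i = x j := fun i j =>
    G.lapMatrix_mulVec_eq_zero_iff_forall_reachable.1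
      (by rw [← lap_eq_lapMatrix, hx, zero_smul]) i j (hG i j)
  obtain ⟨i, hi⟩ := Function.ne_iff.1 hx0
  have hsum : x i * ∑ j, b j = 0 := by
    rw [Finset.mul_sum, ← hxb]
    exact Finset.sum_congr rfl fun j _ => by rw [hconst i j]
  have hbsum : ∑ j, b j = 0 := (mul_eq_zero.1 hsum).resolve_left hi
  exact hb0 ((Fintype.sum_eq_zero_iff_of_nonneg hb).1 hbsum)

end Laplacian

section StronglyUncontrollable

variable {n : ℕ} {G : SimpleGraph (Fin n)}

theorem StronglyUncontrollable.exists_eigenvector (hG : StronglyUncontrollable G)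
    {b : Fin n → ℝ} (hb : ∀ i, b i = 0 ∨ b i = 1) :
    ∃ (a : ℝ) (x : Fin n → ℝ), a ≠ 0 ∧ x ≠ 0 ∧ lap G *ᵥ x = a • x ∧ x ⬝ᵥ b = 0 := by
  obtain ⟨hconn, -, hunc⟩ := hG
  wlog hb0 : b ≠ 0 generalizing b
  · obtain ⟨i⟩ := hconn.nonempty
    obtain ⟨a, x, ha, hx0, hx, -⟩ :=
      this (b := 1) (fun _ => Or.inr rfl) fun h => one_ne_zero (congrFun h i)
    exact ⟨a, x, ha, hx0, hx, by simp [not_not.1 hb0]⟩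
  obtain ⟨a, x, hx0, hx, hxb⟩ :=
    (not_controllable_iff_exists_eigenvector (isSymm_lap G)).1 (hunc b hb)
  have hb' : 0 ≤ b := fun i => by rcases hb i with h | h <;> simp [h]
  exact ⟨a, x, lap_eigenvalue_ne_zero_of_dotProduct_eq_zero hconn hb' hb0 hx0 hx hxb, hx0, hx, hxb⟩

theorem StronglyUncontrollable.three_le (hG : StronglyUncontrollable G) : 3 ≤ n := by
  obtain ⟨i⟩ := hG.1.nonempty
  obtain ⟨a, x, ha, hx0, hx, hxi⟩ := hG.exists_eigenvector (b := Pi.single i 1) fun j => by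
    by_cases h : j = i <;> simp [h]
  have hxi : x i = 0 := by simpa using hxi
  obtain ⟨j, hj⟩ := Function.ne_iff.1 hx0
  have hsum : ∑ k, x k = 0 := sum_eq_zero_of_lap_mulVec_eq_smul ha hx
  have hij : i ≠ j := fun h => hj (h ▸ hxi)
  by_contra! hn
  have huniv : ({i, j} : Finset (Fin n)) = Finset.univ :=
    Finset.eq_univ_of_card _ <| le_antisymm (Finset.card_le_univ _) <| by
      rw [Finset.card_pair hij, Fintype.card_fin]; omega
  rw [← huniv, Finset.sum_pair hij, hxi, zero_add] at hsum
  exact hj hsum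

end StronglyUncontrollable

theorem append_ne_zero_left {α : Type*} [Zero α] {m n : ℕ} {x : Fin m → α} (hx : x ≠ 0)
    (y : Fin n → α) : Fin.append x y ≠ 0 := fun h =>
  hx (funext fun i => by simpa using congrFun h (Fin.castAdd n i))

theorem append_ne_zero_right {α : Type*} [Zero α] {m n : ℕ} (x : Fin m → α) {y : Fin n → α}
    (hy : y ≠ 0) : Fin.append x y ≠ 0 := fun h =>
  hy (funext fun i => by simpa using congrFun h (Fin.natAdd m i))

section JoinTwo

variable {n : ℕ} {G : SimpleGraph (Fin n)}

theorem joinTwo_adj_castAdd (G : SimpleGraph (Fin n)) (i j : Fin n) :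
    (joinTwo G).Adj (Fin.castAdd 2 i) (Fin.castAdd 2 j) ↔ G.Adj i j := by
  simp only [joinTwo, Fin.val_castAdd, Fin.is_lt, exists_true_left, Fin.eta, true_and,
    i.is_lt.not_ge, j.is_lt.not_ge, false_or, ne_eq, (Fin.castAdd_injective n 2).eq_iff]
  exact and_iff_right_of_imp fun h => G.ne_of_adj h

theorem joinTwo_adj_castAdd_natAdd (G : SimpleGraph (Fin n)) (i : Fin n) (k : Fin 2) :
    (joinTwo G).Adj (Fin.castAdd 2 i) (Fin.natAdd n k) :=
  ⟨fun h => by simp [Fin.ext_iff] at h; omega, Or.inl ⟨by simp, by simp⟩⟩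

theorem not_joinTwo_adj_natAdd (G : SimpleGraph (Fin n)) (k l : Fin 2) :
    ¬ (joinTwo G).Adj (Fin.natAdd n k) (Fin.natAdd n l) := by
  simp [joinTwo]

theorem joinTwo_connected (G : SimpleGraph (Fin n)) (hn : n ≠ 0) : (joinTwo G).Connected := by
  rw [SimpleGraph.connected_iff_exists_forall_reachable]
  have hadj := joinTwo_adj_castAdd_natAdd G
  refine ⟨Fin.natAdd n 0, fun s => ?_⟩
  induction s using Fin.addCases with
  | left i => exact (hadj i 0).symm.reachable
  | right k => exact (hadj ⟨0, hn.pos⟩ 0).symm.reachable.trans (hadj ⟨0, hn.pos⟩ k).reachable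

theorem lap_joinTwo_mulVec_append (G : SimpleGraph (Fin n)) (x : Fin n → ℝ) (y : Fin 2 → ℝ) :
    lap (joinTwo G) *ᵥ Fin.append x y =
      Fin.append (fun i => (lap G *ᵥ x) i + 2 * x i - ∑ k, y k) fun k => n * y k - ∑ i, x i := by
  funext s
  rw [lap_mulVec_apply, Fin.sum_univ_add]
  induction s using Fin.addCases with
  | left i =>
    simp only [Fin.append_left, Fin.append_right, joinTwo_adj_castAdd,
      joinTwo_adj_castAdd_natAdd, if_true, lap_mulVec_apply, Fin.sum_univ_two]
    ring
  | right k => simp [(joinTwo_adj_castAdd_natAdd G _ _).symm, not_joinTwo_adj_natAdd]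

theorem lap_joinTwo_mulVec_append_zero {a : ℝ} {x : Fin n → ℝ} (ha : a ≠ 0)
    (hx : lap G *ᵥ x = a • x) :
    lap (joinTwo G) *ᵥ Fin.append x 0 = (a + 2) • Fin.append x 0 := by
  rw [lap_joinTwo_mulVec_append, sum_eq_zero_of_lap_mulVec_eq_smul ha hx, hx]
  funext s
  induction s using Fin.addCases with
  | left i => simp [add_mul]
  | right k => simp

theorem lap_joinTwo_mulVec_zero_append (G : SimpleGraph (Fin n)) {y : Fin 2 → ℝ}
    (hy : ∑ k, y k = 0) :
    lap (joinTwo G) *ᵥ Fin.append 0 y = (n : ℝ) • Fin.append 0 y := by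
  rw [lap_joinTwo_mulVec_append, hy]
  funext s
  induction s using Fin.addCases with
  | left i => simp
  | right k => simp

theorem lap_joinTwo_mulVec_append_const (G : SimpleGraph (Fin n)) :
    lap (joinTwo G) *ᵥ Fin.append (fun _ => 2) (fun _ => -(n : ℝ)) =
      ((n : ℝ) + 2) • Fin.append (fun _ => 2) fun _ => -(n : ℝ) := by
  rw [lap_joinTwo_mulVec_append, lap_mulVec_const]
  funext s
  induction s using Fin.addCases with
  | left i =>
    simp only [Fin.append_left, Pi.zero_apply, Fin.sum_univ_two, Pi.smul_apply, smul_eq_mul]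
    ring
  | right k =>
    simp only [Fin.append_right, Finset.sum_const, Finset.card_univ, Fintype.card_fin,
      nsmul_eq_mul, Pi.smul_apply, smul_eq_mul]
    ring

theorem IsEigenvalue.lap_joinTwo_add_two {a : ℝ} (h : IsEigenvalue (lap G) a) (ha : a ≠ 0) :
    IsEigenvalue (lap (joinTwo G)) (a + 2) := by
  obtain ⟨x, hx0, hx⟩ := h
  exact ⟨_, append_ne_zero_left hx0 0, lap_joinTwo_mulVec_append_zero ha hx⟩

theorem isEigenvalue_lap_joinTwo_natCast (G : SimpleGraph (Fin n)) :
    IsEigenvalue (lap (joinTwo G)) n :=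
  ⟨_, append_ne_zero_right 0 (y := ![1, -1]) (by simp),
    lap_joinTwo_mulVec_zero_append G (by simp)⟩

theorem isEigenvalue_lap_joinTwo_natCast_add_two (G : SimpleGraph (Fin n)) (hn : n ≠ 0) :
    IsEigenvalue (lap (joinTwo G)) (n + 2) :=
  ⟨_, append_ne_zero_right _ fun h => by simpa [hn] using congrFun h 0,
    lap_joinTwo_mulVec_append_const G⟩

theorem HasSimpleSpectrum.not_isEigenvalue_of_joinTwo (h : HasSimpleSpectrum (lap (joinTwo G)))
    {a : ℝ} (ha : a ≠ 0) {x : Fin n → ℝ} {y : Fin 2 → ℝ} (hy : y ≠ 0)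
    (hxy : lap (joinTwo G) *ᵥ Fin.append x y = (a + 2) • Fin.append x y) :
    ¬ IsEigenvalue (lap G) a := by
  rintro ⟨z, hz0, hz⟩
  obtain ⟨c, hc⟩ :=
    h.exists_eq_smul (append_ne_zero_left hz0 0) (lap_joinTwo_mulVec_append_zero ha hz) hxy
  exact hy (funext fun k => by simpa using congrFun hc (Fin.natAdd n k))

theorem HasSimpleSpectrum.lap_joinTwo (hs : HasSimpleSpectrum (lap G)) (hn : n ≠ 0)
    (h₁ : ¬ IsEigenvalue (lap G) ((n : ℝ) - 2)) (h₂ : ¬ IsEigenvalue (lap G) n) :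
    HasSimpleSpectrum (lap (joinTwo G)) := by
  obtain ⟨μ, hμ, hev⟩ := hs
  have hn' : (0 : ℝ) < n := by exact_mod_cast hn.pos
  have hnonneg i : 0 ≤ μ i := nonneg_of_isEigenvalue_lap (hev i)
  have hne₁ i : μ i ≠ n - 2 := fun h => h₁ (h ▸ hev i)
  have hne₂ i : μ i ≠ n := fun h => h₂ (h ▸ hev i)
  let ν : Fin n → ℝ := fun i => if μ i = 0 then 0 else μ i + 2
  have hν : Function.Injective ν := fun i j hij => hμ (by grind)
  have hνn i : ν i ≠ n := by grind
  have hνn₂ i : ν i ≠ n + 2 := by grind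
  refine ⟨Fin.append ν ![(n : ℝ), n + 2], Fin.append_injective_iff.2 ⟨hν, ?_, ?_⟩, fun s => ?_⟩
  · simp [Function.Injective, Fin.forall_fin_two]
  · simp [Fin.forall_fin_two, hνn, hνn₂]
  induction s using Fin.addCases with
  | left i =>
    rw [Fin.append_left]
    by_cases h : μ i = 0
    · simpa [ν, h] using isEigenvalue_lap_zero (joinTwo G) (by omega)
    · simpa [ν, h] using (hev i).lap_joinTwo_add_two h
  | right k =>
    rw [Fin.append_right]
    fin_cases k
    · exact isEigenvalue_lap_joinTwo_natCast G
    · exact isEigenvalue_lap_joinTwo_natCast_add_two G hn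

theorem hasSimpleSpectrum_lap_joinTwo_iff (hs : HasSimpleSpectrum (lap G)) (hn₀ : n ≠ 0)
    (hn₂ : n ≠ 2) :
    HasSimpleSpectrum (lap (joinTwo G)) ↔
      ¬ IsEigenvalue (lap G) ((n : ℝ) - 2) ∧ ¬ IsEigenvalue (lap G) n := by
  refine ⟨fun h => ⟨?_, ?_⟩, fun h => hs.lap_joinTwo hn₀ h.1 h.2⟩
  · have hn : (n : ℝ) - 2 ≠ 0 := sub_ne_zero.2 (by exact_mod_cast hn₂)
    refine h.not_isEigenvalue_of_joinTwo hn (x := 0) (y := ![1, -1]) (by simp) ?_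
    rw [sub_add_cancel]
    exact lap_joinTwo_mulVec_zero_append G (by simp)
  · have hn : (n : ℝ) ≠ 0 := by exact_mod_cast hn₀
    exact h.not_isEigenvalue_of_joinTwo hn
      (fun hy => hn (neg_eq_zero.1 (congrFun hy 0))) (lap_joinTwo_mulVec_append_const G)

theorem StronglyUncontrollable.not_controllable_joinTwo (hG : StronglyUncontrollable G)
    {b : Fin (n + 2) → ℝ} (hb : ∀ i, b i = 0 ∨ b i = 1) : ¬ Controllable (lap (joinTwo G)) b := by
  obtain ⟨a, x, ha, hx0, hx, hxb⟩ :=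
    hG.exists_eigenvector (b := fun i => b (Fin.castAdd 2 i)) fun i => hb _
  refine (not_controllable_iff_exists_eigenvector (isSymm_lap _)).2
    ⟨a + 2, _, append_ne_zero_left hx0 0, lap_joinTwo_mulVec_append_zero ha hx, ?_⟩
  rw [dotProduct, Fin.sum_univ_add]
  simpa [dotProduct] using hxb

theorem StronglyUncontrollable.joinTwo_iff (hG : StronglyUncontrollable G) :
    StronglyUncontrollable (joinTwo G) ↔ HasSimpleSpectrum (lap (joinTwo G)) :=
  ⟨fun h => h.2.1, fun h =>
    ⟨joinTwo_connected G (by have := hG.three_le; omega), h, fun _ => hG.not_controllable_joinTwo⟩⟩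

end JoinTwo

theorem stmt8 {n : ℕ} (G : SimpleGraph (Fin n)) (hG : StronglyUncontrollable G) :
    StronglyUncontrollable (joinTwo G) ↔
      (¬ IsEigenvalue (lap G) ((n : ℝ) - 2) ∧ ¬ IsEigenvalue (lap G) (n : ℝ)) := by
  have hn : 3 ≤ n := hG.three_le
  rw [hG.joinTwo_iff, hasSimpleSpectrum_lap_joinTwo_iff hG.2.1 (by omega) (by omega)]
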